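/- arXiv:2311.07266 — 2 statements merged into one kernel-verified Lean document; each statement's English description precedes it below -/
import Mathlib

section
/- Let (Ω, μ) be a probability space, let n ≥ 1, and for each i ∈ Fin n let Uᵢ, Dᵢ : Ω → Bool be measurable random variables (Uᵢ ω = true representing outcome +1 of the observable Uᵢ, and Dᵢ ω = true representing outcome +1 of the observable Dᵢ). Then μ{ω | ∀ i, Uᵢ ω = true} ≤ (∑_{i ∈ Fin n} μ{ω | Dᵢ ω = true ∧ U_{i+1} ω = true}) + μ{ω | ∀ i, Dᵢ ω = false}, where the index i+1 is taken cyclically in Fin n. In particular, in any local hidden-variable model in which the n+1 probabilities on the right-hand side all vanish, the Hardy success probability μ{ω | ∀ i, Uᵢ ω = true} must vanish, so the generalized n-partite Hardy conditions cannot be satisfied with p > 0 by any local realistic theory. -/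
open MeasureTheory

open scoped ENNReal

lemma iInter_subset_iUnion_inter_union_iInter_compl {Ω ι κ : Type*} (σ : ι → κ)
    (U : κ → Set Ω) (D : ι → Set Ω) :
    ⋂ j, U j ⊆ (⋃ i, D i ∩ U (σ i)) ∪ ⋂ i, (D i)ᶜ := by
  intro ω hU
  by_cases hD : ∃ i, ω ∈ D i
  · obtain ⟨i, hi⟩ := hD
    exact Or.inl (Set.mem_iUnion_of_mem i ⟨hi, Set.mem_iInter.mp hU (σ i)⟩)
  · exact Or.inr (Set.mem_iInter.mpr (not_exists.mp hD))

theorem hardy_local_bound_general {Ω F ι κ : Type*} [FunLike F (Set Ω) ℝ≥0∞]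
    [OuterMeasureClass F Ω] (μ : F) [Countable ι] (σ : ι → κ)
    (U : κ → Set Ω) (D : ι → Set Ω) :
    μ (⋂ j, U j) ≤ ∑' i, μ (D i ∩ U (σ i)) + μ (⋂ i, (D i)ᶜ) :=
  calc
    μ (⋂ j, U j) ≤ μ ((⋃ i, D i ∩ U (σ i)) ∪ ⋂ i, (D i)ᶜ) :=
      measure_mono (iInter_subset_iUnion_inter_union_iInter_compl σ U D)
    _ ≤ μ (⋃ i, D i ∩ U (σ i)) + μ (⋂ i, (D i)ᶜ) := measure_union_le _ _
    _ ≤ ∑' i, μ (D i ∩ U (σ i)) + μ (⋂ i, (D i)ᶜ) := by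
      gcongr
      exact measure_iUnion_le _

/-- **Local bound for the generalized n-partite Hardy argument.**
In a local hidden-variable model, realized on a common probability space
`(Ω, μ)` with measurable `Bool`-valued random variables `Uᵢ, Dᵢ`
(`true` encoding outcome `+1`), the Hardy success probability
`μ {ω | ∀ i, Uᵢ ω = true}` is at most the sum of the `n` probabilities
`μ {ω | Dᵢ ω = true ∧ U_{i+1} ω = true}` (index `i+1` cyclic in `Fin n`)
plus `μ {ω | ∀ i, Dᵢ ω = false}`.  In particular if all `n + 1`
probabilities on the right vanish then the Hardy success probability
vanishes, so the generalized Hardy conditions cannot hold with `p > 0`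
in any local realistic theory. -/
theorem hardy_local_bound {Ω : Type*} [MeasurableSpace Ω]
    (μ : Measure Ω) [IsProbabilityMeasure μ]
    (n : ℕ) [NeZero n] (hn : 1 ≤ n)
    (U D : Fin n → Ω → Bool)
    (hU : ∀ i, Measurable (U i)) (hD : ∀ i, Measurable (D i)) :
    μ {ω | ∀ i, U i ω = true} ≤
      (∑ i : Fin n, μ {ω | D i ω = true ∧ U (i + 1) ω = true}) +
        μ {ω | ∀ i, D i ω = false} := by
  simpa only [← Set.ofPred_forall, ← Set.ofPred_and, Set.compl_ofPred, Bool.not_eq_true,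
    tsum_fintype] using
    hardy_local_bound_general μ (· + 1) (fun i ↦ {ω | U i ω = true}) (fun i ↦ {ω | D i ω = true})
end

section
/- Let n ≥ 2 and let t be the unique real number in (0,1) with ∑_{k=1}^{n} t^k = 1. Define g : (0,1) → ℝ by g(s) = s^n (1−s)^n / (1 − s^n). Then for every s ∈ (0,1), g(s) ≤ g(t) = t^n (1−t)^n / (1 − t^n), with equality if and only if s = t. -/
/-!
The derivative of `g(s) = sⁿ(1 - s)ⁿ / (1 - sⁿ)` is a positive factor times
`1 - 2s + sⁿ⁺¹ = (1 - s)(1 - ∑_{k=1}^n sᵏ)`. Since `∑_{k=1}^n sᵏ` increases strictly with `s`,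
`g` increases strictly up to the point where this sum equals `1` and decreases strictly after it.
-/

open Set

theorem one_sub_mul_one_sub_sum_Icc_pow {R : Type*} [CommRing R] (n : ℕ) (x : R) :
    (1 - x) * (1 - ∑ k ∈ Finset.Icc 1 n, x ^ k) = 1 - 2 * x + x ^ (n + 1) := by
  have geom_sum : (∑ k ∈ Finset.Icc 1 n, x ^ k) * (x - 1) = x ^ (n + 1) - x ^ 1 := by
    rw [← Finset.Ico_add_one_right_eq_Icc]
    exact geom_sum_Ico_mul x (by lia)
  linear_combination geom_sum

theorem strictMonoOn_sum_Icc_pow {R : Type*} [Semiring R] [LinearOrder R] [IsStrictOrderedRing R]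
    {n : ℕ} (hn : n ≠ 0) :
    StrictMonoOn (fun x : R ↦ ∑ k ∈ Finset.Icc 1 n, x ^ k) (Ici 0) := by
  intro x hx y _ hxy
  refine Finset.sum_lt_sum_of_nonempty (Finset.nonempty_Icc.2 (Nat.one_le_iff_ne_zero.2 hn)) ?_
  intro k hk
  exact pow_lt_pow_left₀ hxy hx (Nat.one_le_iff_ne_zero.1 (Finset.mem_Icc.1 hk).1)

/-- The success probability `g(s)` of the `n`-partite Hardy argument when every site uses the
measurement parameter `s = |α|²`. Where `sⁿ = 1` the quotient takes the junk value `0`. -/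
noncomputable def hardyProbability (n : ℕ) (s : ℝ) : ℝ :=
  s ^ n * (1 - s) ^ n / (1 - s ^ n)

namespace hardyProbability

variable {n : ℕ} {s t x : ℝ}

theorem hasDerivAt (hx : x ^ n ≠ 1) :
    HasDerivAt (hardyProbability n)
      (n * (x * (1 - x)) ^ (n - 1) * (1 - x) / (1 - x ^ n) ^ 2 *
        (1 - ∑ k ∈ Finset.Icc 1 n, x ^ k)) x := by
  have denom_ne_zero : 1 - x ^ n ≠ 0 := sub_ne_zero.2 hx.symm
  have deriv_pow := hasDerivAt_pow n x
  have deriv_one_sub_pow := ((hasDerivAt_id' x).const_sub 1).fun_pow n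
  refine ((deriv_pow.fun_mul deriv_one_sub_pow).fun_div
    (deriv_pow.const_sub 1) denom_ne_zero).congr_deriv ?_
  rw [mul_div_right_comm, mul_assoc _ (1 - x), one_sub_mul_one_sub_sum_Icc_pow]
  obtain ⟨m, rfl⟩ : ∃ m, n = m + 1 :=
    Nat.exists_eq_succ_of_ne_zero fun hn ↦ hx (by rw [hn, pow_zero])
  simp only [Nat.add_sub_cancel, mul_pow]
  field_simp
  ring

theorem continuousOn (hn : n ≠ 0) : ContinuousOn (hardyProbability n) (Ioo 0 1) := fun _ hx ↦
  (hasDerivAt (pow_lt_one₀ hx.1.le hx.2 hn).ne).continuousAt.continuousWithinAt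

theorem exists_pos_deriv_eq_mul (hn : n ≠ 0) (hx : x ∈ Ioo 0 1) :
    ∃ c > 0, deriv (hardyProbability n) x = c * (1 - ∑ k ∈ Finset.Icc 1 n, x ^ k) := by
  have pow_lt_one : x ^ n < 1 := pow_lt_one₀ hx.1.le hx.2 hn
  refine ⟨_, ?_, (hasDerivAt pow_lt_one.ne).deriv⟩
  have x_pos : 0 < x := hx.1
  have one_sub_pos : 0 < 1 - x := sub_pos.2 hx.2
  positivity

theorem strictMonoOn (hn : n ≠ 0) (ht : t < 1) (hsum : ∑ k ∈ Finset.Icc 1 n, t ^ k ≤ 1) :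
    StrictMonoOn (hardyProbability n) (Ioc 0 t) := by
  refine strictMonoOn_of_deriv_pos (convex_Ioc 0 t)
    ((continuousOn hn).mono (Ioc_subset_Ioo_right ht)) fun x hx ↦ ?_
  rw [interior_Ioc] at hx
  obtain ⟨c, c_pos, deriv_eq⟩ := exists_pos_deriv_eq_mul hn ⟨hx.1, hx.2.trans ht⟩
  have sum_lt : ∑ k ∈ Finset.Icc 1 n, x ^ k < ∑ k ∈ Finset.Icc 1 n, t ^ k :=
    strictMonoOn_sum_Icc_pow hn hx.1.le (hx.1.trans hx.2).le hx.2
  rw [deriv_eq]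
  exact mul_pos c_pos (sub_pos.2 (sum_lt.trans_le hsum))

theorem strictAntiOn (ht : 0 < t) (hsum : 1 ≤ ∑ k ∈ Finset.Icc 1 n, t ^ k) :
    StrictAntiOn (hardyProbability n) (Ico t 1) := by
  have hn : n ≠ 0 := by
    rintro rfl
    norm_num at hsum
  refine strictAntiOn_of_deriv_neg (convex_Ico t 1)
    ((continuousOn hn).mono (Ico_subset_Ioo_left ht)) fun x hx ↦ ?_
  rw [interior_Ico] at hx
  obtain ⟨c, c_pos, deriv_eq⟩ := exists_pos_deriv_eq_mul hn ⟨ht.trans hx.1, hx.2⟩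
  have sum_lt : ∑ k ∈ Finset.Icc 1 n, t ^ k < ∑ k ∈ Finset.Icc 1 n, x ^ k :=
    strictMonoOn_sum_Icc_pow hn ht.le (ht.trans hx.1).le hx.1
  rw [deriv_eq]
  exact mul_neg_of_pos_of_neg c_pos (sub_neg.2 (hsum.trans_lt sum_lt))

theorem lt_of_sum_eq_one (ht : t ∈ Ioo 0 1) (hsum : ∑ k ∈ Finset.Icc 1 n, t ^ k = 1)
    (hs : s ∈ Ioo 0 1) (hst : s ≠ t) : hardyProbability n s < hardyProbability n t := by
  have hn : n ≠ 0 := by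
    rintro rfl
    simp at hsum
  rcases hst.lt_or_gt with s_lt_t | t_lt_s
  · exact strictMonoOn hn ht.2 hsum.le ⟨hs.1, s_lt_t.le⟩ ⟨ht.1, le_rfl⟩ s_lt_t
  · exact strictAntiOn ht.1 hsum.ge ⟨le_rfl, ht.2⟩ ⟨t_lt_s.le, hs.2⟩ t_lt_s

end hardyProbability

/-- **Optimality of the symmetric Hardy parameter.**
Let `n ≥ 2` and let `t` be the unique number in `(0,1)` with `∑_{k=1}^n t^k = 1`.
For `g(s) = sⁿ(1−s)ⁿ/(1−sⁿ)`, every `s ∈ (0,1)` satisfies `g(s) ≤ g(t)`,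
with equality if and only if `s = t`. -/
theorem hardy_symmetric_probability_maximized (n : ℕ) (hn : 2 ≤ n)
    (t : ℝ) (ht : t ∈ Set.Ioo (0 : ℝ) 1)
    (htsum : ∑ k ∈ Finset.Icc 1 n, t ^ k = 1) :
    ∀ s ∈ Set.Ioo (0 : ℝ) 1,
      s ^ n * (1 - s) ^ n / (1 - s ^ n) ≤ t ^ n * (1 - t) ^ n / (1 - t ^ n) ∧
      (s ^ n * (1 - s) ^ n / (1 - s ^ n) = t ^ n * (1 - t) ^ n / (1 - t ^ n)
        ↔ s = t) := by
  intro s hs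
  change hardyProbability n s ≤ hardyProbability n t ∧
    (hardyProbability n s = hardyProbability n t ↔ s = t)
  rcases eq_or_ne s t with rfl | hst
  · exact ⟨le_rfl, iff_of_true rfl rfl⟩
  · have lt_max := hardyProbability.lt_of_sum_eq_one ht htsum hs hst
    exact ⟨lt_max.le, iff_of_false lt_max.ne hst⟩
end
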